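/- arXiv:2506.11700 — 7 statements merged into one kernel-verified Lean document; each statement's English description precedes it below -/
import Mathlib

section
/- Let X₁, ..., Xₙ be finitely many distinct points of Euclidean space ℝ^N (with the Euclidean norm). Then the n × n real matrix ζ with entries ζᵢⱼ = exp(−‖Xᵢ − Xⱼ‖) is a positive definite matrix. -/
open Matrix MeasureTheory

lemma quad_eq {n : ℕ} (A : Matrix (Fin n) (Fin n) ℝ) (v : Fin n → ℝ) :
    star v ⬝ᵥ (A *ᵥ v) = ∑ i, ∑ j, v i * v j * A i j := by
  simp only [dotProduct, mulVec, Finset.mul_sum, star_trivial]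
  exact Finset.sum_congr rfl fun i _ => Finset.sum_congr rfl fun j _ => by ring

lemma psd_pow {n : ℕ} {A : Matrix (Fin n) (Fin n) ℝ} (hA : A.PosSemidef) (k : ℕ) :
    (Matrix.of fun i j => A i j ^ k).PosSemidef := by
  induction k with
  | zero =>
    refine .of_dotProduct_mulVec_nonneg (by ext; simp) fun v => ?_
    rw [quad_eq]
    have : ∑ i, ∑ j, v i * v j * (Matrix.of fun i j => A i j ^ 0) i j = (∑ i, v i) ^ 2 := by
      simp [sq, Finset.sum_mul_sum]
    rw [this]; positivity
  | succ k ih =>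
    convert! ih.hadamard hA using 1

lemma quad_exp_hasSum {n : ℕ} (A : Matrix (Fin n) (Fin n) ℝ) (v : Fin n → ℝ) :
    HasSum (fun k : ℕ => (∑ i, ∑ j, v i * v j * A i j ^ k) / (k.factorial : ℝ))
      (∑ i, ∑ j, v i * v j * Real.exp (A i j)) := by
  have h : ∀ i j, HasSum (fun k : ℕ => v i * v j * (A i j ^ k / (k.factorial : ℝ)))
      (v i * v j * Real.exp (A i j)) := fun i j => by
    rw [Real.exp_eq_exp_ℝ]
    exact (NormedSpace.expSeries_div_hasSum_exp (A i j)).mul_left _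
  have h2 := hasSum_sum (s := Finset.univ) fun i _ => hasSum_sum (s := Finset.univ) fun j _ => h i j
  convert! h2 using 2 with k
  simp only [Finset.sum_div, mul_div_assoc]

lemma quad_pow_nonneg {n : ℕ} {A : Matrix (Fin n) (Fin n) ℝ} (hA : A.PosSemidef)
    (v : Fin n → ℝ) (k : ℕ) : 0 ≤ ∑ i, ∑ j, v i * v j * A i j ^ k := by
  have := (psd_pow hA k).dotProduct_mulVec_nonneg v
  rwa [quad_eq] at this

lemma quad_exp_sub_one_nonneg {n : ℕ} {A : Matrix (Fin n) (Fin n) ℝ} (hA : A.PosSemidef)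
    (v : Fin n → ℝ) : 0 ≤ ∑ i, ∑ j, v i * v j * (Real.exp (A i j) - 1) := by
  have h := (quad_exp_hasSum A v)
  have h1 := h.summable.sum_le_tsum {0} (fun k _ => by
    have := quad_pow_nonneg hA v k
    positivity)
  rw [h.tsum_eq] at h1
  simp only [mul_sub, Finset.sum_sub_distrib]
  simpa using h1

lemma exp_posDef {n : ℕ} {A : Matrix (Fin n) (Fin n) ℝ} (hA : A.PosSemidef)
    (hs : ∀ i j, A i j = A j j → A i i ≤ A j j → i = j) (v : Fin n → ℝ) (hv : v ≠ 0) :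
    0 < ∑ i, ∑ j, v i * v j * Real.exp (A i j) := by
  have h := quad_exp_hasSum A v
  have hnn : ∀ k : ℕ, 0 ≤ (∑ i, ∑ j, v i * v j * A i j ^ k) / (k.factorial : ℝ) := fun k => by
    have := quad_pow_nonneg hA v k
    positivity
  refine lt_of_le_of_ne (h.nonneg hnn) fun h0 => hv ?_
  rw [← h0, hasSum_zero_iff_of_nonneg hnn] at h
  have hk : ∀ (k : ℕ) (j : Fin n), ∑ i, v i * A i j ^ k = 0 := by
    intro k j
    have h1 := congrFun h k
    have h2 : ∑ i, ∑ j, v i * v j * A i j ^ k = 0 := by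
      simpa [Nat.factorial_ne_zero] using h1
    have h3 := ((psd_pow hA k).dotProduct_mulVec_zero_iff v).1 (by rw [quad_eq]; exact h2)
    have h4 := congrFun h3 j
    simp only [mulVec, dotProduct, Matrix.of_apply, Pi.zero_apply] at h4
    rw [← h4]
    refine Finset.sum_congr rfl fun i _ => ?_
    have : A i j = A j i := by simpa using hA.isHermitian.apply j i
    rw [this, mul_comm]
  have hp : ∀ (p : Polynomial ℝ) (j : Fin n), ∑ i, v i * p.eval (A i j) = 0 := by
    intro p j
    simp only [Polynomial.eval_eq_sum_range, Finset.mul_sum]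
    rw [Finset.sum_comm]
    refine Finset.sum_eq_zero fun k _ => ?_
    have : ∑ i, v i * (p.coeff k * A i j ^ k) = p.coeff k * ∑ i, v i * A i j ^ k := by
      rw [Finset.mul_sum]; exact Finset.sum_congr rfl fun i _ => by ring
    rw [this, hk, mul_zero]
  by_contra hne
  have hS : (Finset.univ.filter fun i => v i ≠ 0).Nonempty := by
    obtain ⟨i, hi⟩ := Function.ne_iff.1 hne
    exact ⟨i, by simpa using hi⟩
  obtain ⟨j, hj, hmax⟩ := Finset.exists_max_image _ (fun i => A i i) hS
  have hj0 : v j ≠ 0 := by simpa using hj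
  let T : Finset ℝ := (Finset.univ.image fun i => A i j).erase (A j j)
  let p : Polynomial ℝ := ∏ c ∈ T, (Polynomial.X - Polynomial.C c)
  have hpe : ∀ x, p.eval x = ∏ c ∈ T, (x - c) := fun x => by
    simp [p, Polynomial.eval_prod]
  have h1 := hp p j
  rw [Finset.sum_eq_single j] at h1
  · rcases mul_eq_zero.1 h1 with h1 | h1
    · exact hj0 h1
    · rw [hpe, Finset.prod_eq_zero_iff] at h1
      obtain ⟨c, hc, hc'⟩ := h1
      exact (Finset.mem_erase.1 hc).1 (by linarith)
  · intro i _ hij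
    by_cases hvi : v i = 0
    · simp [hvi]
    have hle := hmax i (by simpa using hvi)
    have : A i j ≠ A j j := fun h => hij (hs i j h hle)
    rw [hpe, Finset.prod_eq_zero (i := A i j), mul_zero]
    · simp [T, this]
    · simp
  · simp

/-- the integrand -/
noncomputable def sfun (r s : ℝ) : ℝ := (1 - Real.exp (-(r * s) ^ 2)) / s ^ 2

lemma sfun_one_nonneg (s : ℝ) : 0 ≤ sfun 1 s := by
  unfold sfun
  have : Real.exp (-(1 * s) ^ 2) ≤ 1 := Real.exp_le_one_iff.2 (by nlinarith [sq_nonneg s])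
  exact div_nonneg (by linarith) (sq_nonneg s)

lemma sfun_one_integrable : Integrable (sfun 1) := by
  refine Integrable.mono' (integrable_inv_one_add_sq.const_mul 2) ?_ ?_
  · apply Measurable.aestronglyMeasurable
    unfold sfun; fun_prop
  · refine Filter.Eventually.of_forall fun s => ?_
    rw [Real.norm_of_nonneg (sfun_one_nonneg s)]
    unfold sfun
    rcases eq_or_ne s 0 with rfl | hs
    · simp
    have hs2 : 0 < s ^ 2 := by positivity
    rw [← div_eq_mul_inv, div_le_div_iff₀ hs2 (by positivity)]
    have h1 := Real.add_one_le_exp (-(1 * s) ^ 2)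
    have h2 := Real.exp_pos (-(1 * s) ^ 2)
    nlinarith

lemma sfun_eq (r s : ℝ) : sfun r s = r ^ 2 * sfun 1 (r * s) := by
  unfold sfun
  rcases eq_or_ne r 0 with rfl | hr
  · simp
  rw [one_mul, mul_pow, mul_div_assoc', mul_div_mul_left _ _ (pow_ne_zero 2 hr)]

lemma sfun_integrable (r : ℝ) : Integrable (sfun r) := by
  have : sfun r = fun s => r ^ 2 * sfun 1 (r * s) := funext (sfun_eq r)
  rw [this]
  rcases eq_or_ne r 0 with rfl | hr
  · simp
  exact (sfun_one_integrable.comp_mul_left' hr).const_mul _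

lemma sfun_integral {r : ℝ} (hr : 0 ≤ r) : ∫ s, sfun r s = r * ∫ s, sfun 1 s := by
  simp only [sfun_eq r]
  rw [integral_const_mul, Measure.integral_comp_mul_left]
  rcases eq_or_ne r 0 with rfl | hr'
  · simp
  rw [abs_of_nonneg (inv_nonneg.2 hr), smul_eq_mul]
  field_simp

lemma sfun_integral_pos : 0 < ∫ s, sfun 1 s := by
  rw [integral_pos_iff_support_of_nonneg sfun_one_nonneg sfun_one_integrable]
  refine lt_of_lt_of_le ?_ (measure_mono (s := Set.Ioo 0 1) ?_)
  · simp
  · intro s hs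
    have hs2 : 0 < s ^ 2 := pow_pos hs.1 2
    have : Real.exp (-(1 * s) ^ 2) < 1 := Real.exp_lt_one_iff.2 (by nlinarith)
    rw [Function.mem_support, sfun]
    exact (div_pos (by linarith) hs2).ne'

lemma sfun_quad_nonneg {n : ℕ} {E : Type*} [NormedAddCommGroup E] [InnerProductSpace ℝ E]
    (X : Fin n → E) (v : Fin n → ℝ) (s : ℝ) :
    0 ≤ ∑ i, ∑ j, v i * v j * (sfun ‖X i‖ s + sfun ‖X j‖ s - sfun ‖X i - X j‖ s) := by
  let a : Fin n → ℝ := fun i => Real.exp (-(‖X i‖ * s) ^ 2)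
  let A : Matrix (Fin n) (Fin n) ℝ := (2 * s ^ 2) • Matrix.gram ℝ X
  have hA : A.PosSemidef := (Matrix.posSemidef_gram ℝ X).smul (by positivity)
  have h1 := quad_exp_sub_one_nonneg hA fun i => v i * a i
  have hexp : ∀ i j, Real.exp (-(‖X i - X j‖ * s) ^ 2) = a i * a j * Real.exp (A i j) := by
    intro i j
    simp only [a, A, ← Real.exp_add]
    congr 1
    rw [mul_pow, norm_sub_sq_real]
    simp [Matrix.gram_apply]
    ring
  have h2 : ∑ i, ∑ j, v i * v j * (sfun ‖X i‖ s + sfun ‖X j‖ s - sfun ‖X i - X j‖ s) =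
      ((∑ i, v i * (1 - a i)) ^ 2
        + ∑ i, ∑ j, (v i * a i) * (v j * a j) * (Real.exp (A i j) - 1)) / s ^ 2 := by
    rw [sq (∑ i, v i * (1 - a i)), Finset.sum_mul_sum]
    simp only [← Finset.sum_add_distrib, Finset.sum_div]
    refine Finset.sum_congr rfl fun i _ => Finset.sum_congr rfl fun j _ => ?_
    simp only [sfun, hexp]
    change v i * v j * ((1 - a i) / s ^ 2 + (1 - a j) / s ^ 2 - _) = _
    ring
  rw [h2]
  positivity

lemma dist_psd {n : ℕ} {E : Type*} [NormedAddCommGroup E] [InnerProductSpace ℝ E]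
    (X : Fin n → E) :
    (Matrix.of fun i j : Fin n => ‖X i‖ + ‖X j‖ - ‖X i - X j‖).PosSemidef := by
  refine .of_dotProduct_mulVec_nonneg ?_ fun v => ?_
  · ext i j
    simp [norm_sub_rev (X i) (X j), add_comm]
  rw [quad_eq]
  have h : 0 ≤ ∫ s, ∑ i, ∑ j, v i * v j * (sfun ‖X i‖ s + sfun ‖X j‖ s - sfun ‖X i - X j‖ s) :=
    integral_nonneg fun s => sfun_quad_nonneg X v s
  have hi : ∀ i j, Integrable fun s =>
      v i * v j * (sfun ‖X i‖ s + sfun ‖X j‖ s - sfun ‖X i - X j‖ s) := fun i j =>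
    (((sfun_integrable _).add (sfun_integrable _)).sub (sfun_integrable _)).const_mul _
  rw [integral_finsetSum _ fun i _ => integrable_finsetSum _ fun j _ => hi i j] at h
  simp_rw [integral_finsetSum _ fun j _ => hi _ j] at h
  have he : ∀ i j, ∫ s, v i * v j * (sfun ‖X i‖ s + sfun ‖X j‖ s - sfun ‖X i - X j‖ s) =
      v i * v j * (‖X i‖ + ‖X j‖ - ‖X i - X j‖) * ∫ s, sfun 1 s := by
    intro i j
    have hadd : Integrable fun s => sfun ‖X i‖ s + sfun ‖X j‖ s :=
      (sfun_integrable _).add (sfun_integrable _)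
    rw [integral_const_mul, integral_sub hadd
      (sfun_integrable _), integral_add (sfun_integrable _) (sfun_integrable _),
      sfun_integral (norm_nonneg _), sfun_integral (norm_nonneg _), sfun_integral (norm_nonneg _)]
    ring
  simp_rw [he, ← Finset.sum_mul] at h
  exact nonneg_of_mul_nonneg_left h sfun_integral_pos

/-- For finitely many distinct points `X 1, ..., X n` of Euclidean space `ℝ^N`,
the `n × n` matrix with entries `exp (-‖X i - X j‖)` is positive definite. -/
theorem exp_neg_dist_matrix_posDef (n N : ℕ) (X : Fin n → EuclideanSpace ℝ (Fin N))
    (hX : Function.Injective X) :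
    (Matrix.of fun i j : Fin n => Real.exp (-‖X i - X j‖)).PosDef := by
  refine .of_dotProduct_mulVec_pos ?_ fun v hv => ?_
  · ext i j
    simp [norm_sub_rev (X i) (X j)]
  rw [quad_eq]
  have h := exp_posDef (dist_psd X) (fun i j h1 h2 => by
    simp only [Matrix.of_apply, sub_self, norm_zero] at h1 h2
    have : ‖X i - X j‖ = 0 := le_antisymm (by linarith) (norm_nonneg _)
    exact hX (sub_eq_zero.1 (norm_eq_zero.1 this)))
    (fun i => v i * Real.exp (-‖X i‖)) (fun h0 => hv (by
      ext i
      have := congrFun h0 i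
      simpa using this))
  refine h.trans_eq ?_
  refine Finset.sum_congr rfl fun i _ => Finset.sum_congr rfl fun j _ => ?_
  simp only [Matrix.of_apply]
  have : Real.exp (-‖X i - X j‖) = Real.exp (-‖X i‖) * Real.exp (-‖X j‖) *
      Real.exp (‖X i‖ + ‖X j‖ - ‖X i - X j‖) := by
    rw [← Real.exp_add, ← Real.exp_add]; congr 1; ring
  rw [this]; ring
end

section
/- Let X be a finite set, let Φ : X → ℝ^N be an injective map, and define d(x,y) = ‖Φ(x) − Φ(y)‖ (the Euclidean norm of the difference), so that (X,d) is a finite metric space. Then (X,d) is positive definite, i.e. the similarity matrix ζ_X with entries ζ_X(x,y) = exp(−d(x,y)) is a positive definite matrix. In particular, any finite metric space endowed with a diffusion distance (which by construction isometrically embeds into Euclidean space) is positive definite. -/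
open MeasureTheory

section
variable {V : Type*} [NormedAddCommGroup V] [InnerProductSpace ℝ V] [FiniteDimensional ℝ V]
  [MeasurableSpace V] [BorelSpace V]

theorem gauss_int : Integrable (fun z : V => Real.exp (-4 * ‖z‖^2)) := by
  by_contra h
  have h1 := GaussianFourier.integral_rexp_neg_mul_sq_norm (V := V) (b := 4) (by norm_num)
  rw [integral_undef h] at h1
  have : (0:ℝ) < (Real.pi / 4) ^ (Module.finrank ℝ V / 2 : ℝ) := by positivity
  linarith

theorem gauss_prod (x y z : V) : Real.exp (-2 * ‖z - x‖^2) * Real.exp (-2 * ‖z - y‖^2)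
    = Real.exp (-‖x - y‖^2) * Real.exp (-4 * ‖z - (1/2:ℝ) • (x + y)‖^2) := by
  rw [← Real.exp_add, ← Real.exp_add]
  congr 1
  have e1 : z - x = (z - (1/2:ℝ) • (x + y)) - (1/2:ℝ) • (x - y) := by module
  have e2 : z - y = (z - (1/2:ℝ) • (x + y)) + (1/2:ℝ) • (x - y) := by module
  rw [e1, e2, @norm_sub_sq_real, @norm_add_sq_real, norm_smul]
  norm_num
  ring

theorem gauss_form {X : Type*} [Fintype X] (p : X → V) (c : X → ℝ) :
    Integrable (fun z : V => (∑ i, c i * Real.exp (-2 * ‖z - p i‖^2))^2) ∧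
    ∫ z : V, (∑ i, c i * Real.exp (-2 * ‖z - p i‖^2))^2 =
      (∑ i, ∑ j, c i * c j * Real.exp (-‖p i - p j‖^2)) * ∫ z : V, Real.exp (-4 * ‖z‖^2) := by
  have e : ∀ z : V, (∑ i, c i * Real.exp (-2 * ‖z - p i‖^2))^2 =
      ∑ i, ∑ j, (c i * c j * Real.exp (-‖p i - p j‖^2)) *
        Real.exp (-4 * ‖z - (1/2:ℝ) • (p i + p j)‖^2) := by
    intro z
    rw [sq, Finset.sum_mul_sum]
    refine Finset.sum_congr rfl fun i _ => Finset.sum_congr rfl fun j _ => ?_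
    rw [mul_assoc (c i * c j), ← gauss_prod]; ring
  have hi : ∀ i j, Integrable (fun z : V => (c i * c j * Real.exp (-‖p i - p j‖^2)) *
        Real.exp (-4 * ‖z - (1/2:ℝ) • (p i + p j)‖^2)) := fun i j =>
    (gauss_int.comp_sub_right _).const_mul _
  simp_rw [e]
  refine ⟨integrable_finsetSum _ fun i _ => integrable_finsetSum _ fun j _ => hi i j, ?_⟩
  rw [integral_finsetSum _ fun i _ => integrable_finsetSum _ fun j _ => hi i j, Finset.sum_mul]
  refine Finset.sum_congr rfl fun i _ => ?_
  rw [integral_finsetSum _ fun j _ => hi i j, Finset.sum_mul]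
  refine Finset.sum_congr rfl fun j _ => ?_
  rw [integral_const_mul, integral_sub_right_eq_self (fun z : V => Real.exp (-4 * ‖z‖^2))]

theorem gauss_pos : 0 < ∫ z : V, Real.exp (-4 * ‖z‖^2) := by
  rw [GaussianFourier.integral_rexp_neg_mul_sq_norm (V := V) (b := 4) (by norm_num)]
  positivity

theorem gauss_nonneg {X : Type*} [Fintype X] (p : X → V) (c : X → ℝ) :
    0 ≤ ∑ i, ∑ j, c i * c j * Real.exp (-‖p i - p j‖^2) := by
  have h := (gauss_form p c).2
  have h2 : 0 ≤ ∫ z : V, (∑ i, c i * Real.exp (-2 * ‖z - p i‖^2))^2 :=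
    integral_nonneg fun z => sq_nonneg _
  rw [h] at h2
  exact nonneg_of_mul_nonneg_left h2 gauss_pos

theorem gauss_strict {X : Type*} [Fintype X] (p : X → V) (hp : Function.Injective p)
    (c : X → ℝ) (h0 : ∑ i, ∑ j, c i * c j * Real.exp (-‖p i - p j‖^2) = 0) : c = 0 := by
  obtain ⟨hI, h⟩ := gauss_form p c
  rw [h0, zero_mul, integral_eq_zero_iff_of_nonneg (fun z => sq_nonneg _) hI] at h
  have hc : Continuous fun z : V => (∑ i, c i * Real.exp (-2 * ‖z - p i‖^2))^2 := by fun_prop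
  have h1 := (hc.ae_eq_iff_eq volume continuous_zero).1 h
  let χ : X → (Multiplicative V →* ℝ) := fun i =>
    { toFun := fun z => Real.exp (4 * inner ℝ (p i) z.toAdd)
      map_one' := by simp
      map_mul' := fun a b => by simp [inner_add_right, mul_add, Real.exp_add] }
  have hχ : Function.Injective χ := by
    intro i j hij
    apply hp
    refine ext_inner_right ℝ fun v => ?_
    have := DFunLike.congr_fun hij (Multiplicative.ofAdd v)
    simpa [χ] using this
  have hl := (linearIndependent_monoidHom (Multiplicative V) ℝ).comp χ hχ
  rw [Fintype.linearIndependent_iff] at hl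
  have := hl (fun i => c i * Real.exp (-2 * ‖p i‖^2)) (by
    funext z
    have hz := congrFun h1 z.toAdd
    simp only [Pi.zero_apply, ne_eq, OfNat.ofNat_ne_zero, not_false_eq_true, pow_eq_zero_iff] at hz
    have : ∀ i, c i * Real.exp (-2 * ‖z.toAdd - p i‖^2) =
       Real.exp (-2 * ‖z.toAdd‖^2) * (c i * Real.exp (-2 * ‖p i‖^2) * Real.exp (4 * inner ℝ (p i) z.toAdd)) := by
      intro i
      rw [@norm_sub_sq_real, real_inner_comm, mul_left_comm, mul_assoc, mul_left_comm, mul_left_comm (Real.exp _), ← Real.exp_add, ← Real.exp_add]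
      congr 2
      ring
    simp_rw [this, ← Finset.mul_sum] at hz
    simpa [χ, Finset.sum_apply] using hz)
  funext i
  simpa using this i
end

theorem base_bound (s : ℝ) : (1 - Real.exp (-s^2)) / s^2 ≤ 2 * (1 + s^2)⁻¹ := by
  rcases eq_or_ne s 0 with rfl | hs
  · simp
  have h1 := Real.add_one_le_exp (-s^2)
  have h2 := Real.exp_pos (-s^2)
  have : 0 < s^2 := by positivity
  rw [← div_eq_mul_inv, div_le_div_iff₀ this (by positivity)]
  nlinarith

theorem base_nonneg (s : ℝ) : 0 ≤ (1 - Real.exp (-s^2)) / s^2 := by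
  have : Real.exp (-s^2) ≤ 1 := Real.exp_le_one_iff.2 (by nlinarith [sq_nonneg s])
  exact div_nonneg (by linarith) (sq_nonneg s)

theorem base_int : Integrable (fun s : ℝ => (1 - Real.exp (-s^2)) / s^2) := by
  refine (integrable_inv_one_add_sq.const_mul 2).mono' ?_ (.of_forall fun s => ?_)
  · exact (by fun_prop : Measurable fun s : ℝ => (1 - Real.exp (-s^2)) / s^2).aestronglyMeasurable
  · rw [Real.norm_of_nonneg (base_nonneg s)]; exact base_bound s

theorem base_pos : 0 < ∫ s : ℝ, (1 - Real.exp (-s^2)) / s^2 := by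
  rw [integral_pos_iff_support_of_nonneg base_nonneg base_int]
  have : Set.Ioi (0:ℝ) ⊆ Function.support (fun s : ℝ => (1 - Real.exp (-s^2)) / s^2) := by
    intro s hs
    have hs : 0 < s := hs
    have : Real.exp (-s^2) < 1 := by
      rw [← Real.exp_zero]; exact Real.exp_lt_exp.2 (by nlinarith [sq_pos_of_pos hs])
    exact (div_pos (by linarith) (by positivity)).ne'
  exact lt_of_lt_of_le (by simp) (measure_mono this)

theorem scale_eq (r s : ℝ) : (1 - Real.exp (-(r*s)^2)) / s^2 =
    r^2 * ((1 - Real.exp (-(r*s)^2)) / (r*s)^2) := by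
  rcases eq_or_ne r 0 with rfl | hr
  · simp
  rcases eq_or_ne s 0 with rfl | hs
  · simp
  field_simp

theorem scale_int (r : ℝ) : Integrable (fun s : ℝ => (1 - Real.exp (-(r*s)^2)) / s^2) := by
  rcases eq_or_ne r 0 with rfl | hr
  · simp
  simp_rw [scale_eq r]
  exact (base_int.comp_mul_left' hr).const_mul _

theorem scale_val (r : ℝ) (hr : 0 ≤ r) : ∫ s : ℝ, (1 - Real.exp (-(r*s)^2)) / s^2 =
    r * ∫ s : ℝ, (1 - Real.exp (-s^2)) / s^2 := by
  rcases eq_or_ne r 0 with rfl | hr'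
  · simp
  simp_rw [scale_eq r]
  rw [integral_const_mul, Measure.integral_comp_mul_left (fun s : ℝ => (1 - Real.exp (-s^2)) / s^2)]
  rw [abs_of_nonneg (by positivity), smul_eq_mul]
  field_simp

theorem cnd {V : Type*} [NormedAddCommGroup V] [InnerProductSpace ℝ V] [FiniteDimensional ℝ V]
    {X : Type*} [Fintype X] (p : X → V) (c : X → ℝ) :
    0 ≤ ∑ i, ∑ j, c i * c j * (‖p i‖ + ‖p j‖ - ‖p i - p j‖) := by
  let _ : MeasurableSpace V := borel V
  have _ : BorelSpace V := ⟨rfl⟩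
  let F : ℝ → ℝ → ℝ := fun r s => (1 - Real.exp (-(r*s)^2)) / s^2
  have hi : ∀ i j, Integrable (fun s => c i * c j * (F ‖p i‖ s + F ‖p j‖ s - F ‖p i - p j‖ s)) :=
    fun i j => (((scale_int _).add (scale_int _)).sub (scale_int _)).const_mul _
  have key : ∫ s : ℝ, ∑ i, ∑ j, c i * c j * (F ‖p i‖ s + F ‖p j‖ s - F ‖p i - p j‖ s) =
    (∑ i, ∑ j, c i * c j * (‖p i‖ + ‖p j‖ - ‖p i - p j‖)) * ∫ s : ℝ, (1 - Real.exp (-s^2)) / s^2 := by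
    rw [integral_finsetSum _ fun i _ => integrable_finsetSum _ fun j _ => hi i j, Finset.sum_mul]
    refine Finset.sum_congr rfl fun i _ => ?_
    rw [integral_finsetSum _ fun j _ => hi i j, Finset.sum_mul]
    refine Finset.sum_congr rfl fun j _ => ?_
    have hF : ∀ r, Integrable (F r) := scale_int
    have hv : ∀ r, 0 ≤ r → ∫ s, F r s = r * ∫ s : ℝ, (1 - Real.exp (-s^2)) / s^2 := scale_val
    have hF2 : ∀ r t, Integrable (fun s => F r s + F t s) := fun r t => (hF r).add (hF t)
    rw [integral_const_mul, integral_sub (hF2 _ _) (hF _),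
      integral_add (hF _) (hF _), hv _ (norm_nonneg _),
      hv _ (norm_nonneg _), hv _ (norm_nonneg _)]
    ring
  have hn : 0 ≤ ∫ s : ℝ, ∑ i, ∑ j, c i * c j * (F ‖p i‖ s + F ‖p j‖ s - F ‖p i - p j‖ s) := by
    refine integral_nonneg fun s => ?_
    have h := gauss_nonneg (X := Option X) (fun o => s • (o.elim 0 p : V))
      (fun o => o.elim (-∑ i, c i) c)
    have hg : ∀ v : V, ‖s • v‖^2 = (‖v‖ * s)^2 := by
      intro v; rw [norm_smul, mul_pow, mul_pow, Real.norm_eq_abs, sq_abs]; ring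
    simp only [← smul_sub, hg, Fintype.sum_option, Option.elim, sub_zero, zero_sub, norm_neg,
      norm_zero, zero_mul] at h
    have : ∑ i, ∑ j, c i * c j * (F ‖p i‖ s + F ‖p j‖ s - F ‖p i - p j‖ s) =
      (∑ i, ∑ j, c i * c j * (1 - Real.exp (-(‖p i‖*s)^2) - Real.exp (-(‖p j‖*s)^2)
        + Real.exp (-(‖p i - p j‖*s)^2))) / s^2 := by
      simp only [Finset.sum_div]
      refine Finset.sum_congr rfl fun i _ => Finset.sum_congr rfl fun j _ => ?_
      simp only [F]; ring
    simp only [Pi.zero_apply]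
    rw [this]
    refine div_nonneg (h.trans_eq ?_) (sq_nonneg s)
    simp only [mul_add, mul_sub, Finset.sum_add_distrib, Finset.sum_sub_distrib]
    have a1 : ∑ i, ∑ j, c i * c j * 1 = (∑ i, c i) * ∑ i, c i := by
      simp [Finset.sum_mul_sum]
    have a2 : ∑ i, ∑ j, c i * c j * Real.exp (-(‖p i‖*s)^2) =
      (∑ i, c i * Real.exp (-(‖p i‖*s)^2)) * ∑ i, c i := by
      rw [Finset.sum_mul_sum]
      exact Finset.sum_congr rfl fun i _ => Finset.sum_congr rfl fun j _ => by ring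
    have a3 : ∑ i, ∑ j, c i * c j * Real.exp (-(‖p j‖*s)^2) =
      (∑ i, c i) * ∑ i, c i * Real.exp (-(‖p i‖*s)^2) := by
      rw [Finset.sum_mul_sum]
      exact Finset.sum_congr rfl fun i _ => Finset.sum_congr rfl fun j _ => by ring
    have a4 : ∑ j, (-∑ i, c i) * c j * Real.exp (-(‖p j‖*s)^2) =
      -((∑ i, c i) * ∑ i, c i * Real.exp (-(‖p i‖*s)^2)) := by
      rw [← neg_mul, Finset.mul_sum]
      exact Finset.sum_congr rfl fun i _ => by ring
    have a5 : ∑ j, c j * (-∑ i, c i) * Real.exp (-(‖p j‖*s)^2) =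
      -((∑ i, c i) * ∑ i, c i * Real.exp (-(‖p i‖*s)^2)) := by
      rw [← neg_mul, Finset.mul_sum]
      exact Finset.sum_congr rfl fun i _ => by ring
    rw [a1, a2, a3, a4, a5]
    simp
    ring
  rw [key] at hn
  exact nonneg_of_mul_nonneg_left hn base_pos

open scoped MatrixOrder ComplexOrder in
theorem snowflake {V : Type*} [NormedAddCommGroup V] [InnerProductSpace ℝ V]
    [FiniteDimensional ℝ V] {X : Type*} [Fintype X] (p : X → V) :
    ∃ v : X → EuclideanSpace ℝ X, ∀ i j, ‖v i - v j‖^2 = ‖p i - p j‖ := by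
  classical
  have hP : (Matrix.of fun i j => (‖p i‖ + ‖p j‖ - ‖p i - p j‖)).PosSemidef := by
    refine Matrix.PosSemidef.of_dotProduct_mulVec_nonneg ?_ fun c => ?_
    · ext i j
      simp [norm_sub_rev, add_comm]
    · refine (cnd p c).trans_eq ?_
      simp only [dotProduct, Matrix.mulVec, Finset.mul_sum, Matrix.of_apply, star_trivial]
      exact Finset.sum_congr rfl fun i _ => Finset.sum_congr rfl fun j _ => by ring
  obtain ⟨B, hB⟩ := CStarAlgebra.nonneg_iff_eq_star_mul_self.mp hP.nonneg
  have hB' : ∀ i j, ‖p i‖ + ‖p j‖ - ‖p i - p j‖ = ∑ k, B k i * B k j := by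
    intro i j
    have := congrFun (congrFun hB i) j
    simpa [Matrix.mul_apply, Matrix.star_eq_conjTranspose] using this
  have hs : (0:ℝ) ≤ 1/2 := by norm_num
  refine ⟨fun i => WithLp.toLp 2 fun k => Real.sqrt (1/2) * B k i, fun i j => ?_⟩
  have e1 := hB' i i
  have e2 := hB' j j
  have e3 := hB' i j
  simp only [sub_self, norm_zero, sub_zero] at e1 e2
  rw [EuclideanSpace.norm_sq_eq]
  have : ∀ k, ‖(WithLp.toLp 2 (fun k => Real.sqrt (1/2) * B k i) -
     WithLp.toLp 2 (fun k => Real.sqrt (1/2) * B k j) : EuclideanSpace ℝ X) k‖^2 =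
     1/2 * (B k i * B k i) + 1/2 * (B k j * B k j) - B k i * B k j := by
    intro k
    rw [Real.norm_eq_abs, sq_abs]
    simp only [PiLp.sub_apply]
    rw [← mul_sub, mul_pow, Real.sq_sqrt hs]
    ring
  simp_rw [this]
  rw [Finset.sum_sub_distrib, Finset.sum_add_distrib, ← Finset.mul_sum, ← Finset.mul_sum,
    ← e1, ← e2, ← e3]
  ring

/-- If `X` is a finite set, `Φ : X → ℝ^N` is injective, and
`d x y = ‖Φ x - Φ y‖`, then the finite metric space `(X, d)` is positive definite:
its similarity matrix `ζ_X (x, y) = exp (-(d x y))` is a positive definite matrix. -/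
theorem euclidean_embedded_finite_metric_space_posDef
    (X : Type*) [Fintype X] (N : ℕ) (Φ : X → EuclideanSpace ℝ (Fin N))
    (hΦ : Function.Injective Φ)
    (d : X → X → ℝ) (hd : ∀ x y, d x y = ‖Φ x - Φ y‖) :
    (Matrix.of fun x y : X => Real.exp (-(d x y))).PosDef := by
  obtain ⟨v, hv⟩ := snowflake Φ
  have hvi : Function.Injective v := by
    intro i j hij
    have := hv i j
    rw [hij, sub_self, norm_zero] at this
    exact hΦ (sub_eq_zero.1 (norm_eq_zero.1 (by rw [← this]; norm_num)))
  refine Matrix.PosDef.of_dotProduct_mulVec_pos ?_ fun {c} hc => ?_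
  · ext i j
    simp [hd, norm_sub_rev]
  · have e : star c ⬝ᵥ ((Matrix.of fun x y : X => Real.exp (-(d x y))).mulVec c) =
      ∑ i, ∑ j, c i * c j * Real.exp (-‖v i - v j‖^2) := by
      simp only [dotProduct, Matrix.mulVec, Finset.mul_sum, Matrix.of_apply, star_trivial, hv, hd]
      exact Finset.sum_congr rfl fun i _ => Finset.sum_congr rfl fun j _ => by ring
    rw [e]
    exact lt_of_le_of_ne (gauss_nonneg v c) fun h => hc (gauss_strict v hvi c h.symm)
end

section
/- Let (X,d) be a positive definite finite metric space with |X| = n ≥ 1. Then Mag(X) = sup over nonzero v ∈ ℝⁿ of ( Σᵢ vᵢ )² / ( vᵀ ζ_X v ), where the supremum is attained (for instance at the weighting vector w = ζ_X⁻¹ 𝟙). -/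
open Matrix

/-- For a positive definite finite metric space `(X, d)` with `|X| ≥ 1`,
the magnitude `Mag X = ∑ x y, ζ_X⁻¹ x y` is the supremum over nonzero `v` of
`(∑ x, v x)² / (vᵀ ζ_X v)`, and this supremum is attained (e.g. at `w = ζ_X⁻¹ 𝟙`),
i.e. `Mag X` is the greatest element of the set of such quotient values. -/
theorem magnitude_isGreatest_rayleigh
    {X : Type*} [Fintype X] [DecidableEq X] [Nonempty X] [MetricSpace X]
    (ζ : Matrix X X ℝ) (hζdef : ζ = Matrix.of fun x y => Real.exp (-dist x y))
    (hζ : ζ.PosDef) :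
    IsGreatest {r : ℝ | ∃ v : X → ℝ, v ≠ 0 ∧ r = (∑ x, v x) ^ 2 / (v ⬝ᵥ ζ.mulVec v)}
      (∑ x, ∑ y, ζ⁻¹ x y) := by
  set w : X → ℝ := ζ⁻¹ *ᵥ 1 with hw
  set M : ℝ := ∑ x, ∑ y, ζ⁻¹ x y with hM
  have hdet : IsUnit ζ.det := (Matrix.isUnit_iff_isUnit_det ζ).1 hζ.isUnit
  have hζw : ζ *ᵥ w = 1 := by
    rw [hw, Matrix.mulVec_mulVec, Matrix.mul_nonsing_inv _ hdet, Matrix.one_mulVec]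
  have hsw : ∑ x, w x = M := by
    simp [hw, hM, Matrix.mulVec, dotProduct]
  have hsym : ζᵀ = ζ := by
    have h := hζ.isHermitian.eq
    rwa [Matrix.conjTranspose_eq_transpose_of_trivial] at h
  have hw0 : w ≠ 0 := by
    intro h
    rw [h, Matrix.mulVec_zero] at hζw
    exact zero_ne_one hζw
  have hvw : ∀ v : X → ℝ, v ⬝ᵥ ζ *ᵥ w = ∑ x, v x := by
    intro v
    rw [hζw, dotProduct_one]
  have hwv : ∀ v : X → ℝ, w ⬝ᵥ ζ *ᵥ v = ∑ x, v x := by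
    intro v
    rw [Matrix.dotProduct_mulVec, ← Matrix.mulVec_transpose, hsym, hζw, one_dotProduct]
  have hpos : ∀ v : X → ℝ, v ≠ 0 → 0 < v ⬝ᵥ ζ *ᵥ v := by
    intro v hv
    simpa using hζ.dotProduct_mulVec_pos hv
  have hnn : ∀ v : X → ℝ, 0 ≤ v ⬝ᵥ ζ *ᵥ v := by
    intro v
    simpa using hζ.posSemidef.dotProduct_mulVec_nonneg v
  have hMpos : 0 < M := by
    have h := hpos w hw0
    rwa [hvw, hsw] at h
  constructor
  · refine ⟨w, hw0, ?_⟩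
    rw [hvw, hsw]
    field_simp
  · rintro r ⟨v, hv, rfl⟩
    rw [div_le_iff₀ (hpos v hv)]
    have h := hnn (M • v - (∑ x, v x) • w)
    simp only [Matrix.mulVec_sub, Matrix.mulVec_smul, dotProduct_sub, sub_dotProduct,
      smul_dotProduct, dotProduct_smul, hvw, hwv, hsw, smul_eq_mul, Pi.sub_apply, Pi.smul_apply,
      Finset.sum_sub_distrib, ← Finset.mul_sum] at h
    have h2 : 0 ≤ M * (M * (v ⬝ᵥ ζ *ᵥ v) - (∑ x, v x) ^ 2) := by nlinarith [h]
    have h3 := nonneg_of_mul_nonneg_right h2 hMpos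
    linarith
end

section
/- Let (X,d) be a nonempty positive definite finite metric space. Then Mag(X) > 0, i.e. the sum of all entries of ζ_X⁻¹ is strictly positive. -/
/-- For a nonempty positive definite finite metric space `(X, d)`,
the magnitude `Mag X = ∑ x y, ζ_X⁻¹ x y` is strictly positive. -/
theorem magnitude_pos
    {X : Type*} [Fintype X] [DecidableEq X] [Nonempty X] [MetricSpace X]
    (hζ : (Matrix.of fun x y : X => Real.exp (-dist x y)).PosDef) :
    0 < ∑ x, ∑ y, (Matrix.of fun x y : X => Real.exp (-dist x y))⁻¹ x y := by
  have h := hζ.inv.dotProduct_mulVec_pos (x := fun _ => (1 : ℝ))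
    (fun h0 => one_ne_zero (congrFun h0 (Classical.arbitrary X)))
  simpa only [dotProduct, Matrix.mulVec, Pi.star_apply, star_one, one_mul, mul_one] using h
end

section
/- Let (X,d) be a positive definite finite metric space and let Y ⊆ X be a nonempty subset endowed with the induced metric (so that (Y, d|_Y) is also positive definite, as a principal submatrix of a positive definite matrix is positive definite). Then Mag(Y) ≤ Mag(X). -/
open Matrix in
theorem mag_aux {X Y : Type*} [Fintype X] [DecidableEq X] [Fintype Y] [DecidableEq Y]
    (A : Matrix X X ℝ) (hA : A.PosDef) (e : Y → X) (he : Function.Injective e) :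
    (1 : Y → ℝ) ⬝ᵥ ((A.submatrix e e)⁻¹ *ᵥ 1) ≤ (1 : X → ℝ) ⬝ᵥ (A⁻¹ *ᵥ 1) := by
  have hB := hA.submatrix he
  have hAu : IsUnit A.det := (Matrix.isUnit_iff_isUnit_det _).1 hA.isUnit
  have hBu : IsUnit (A.submatrix e e).det := (Matrix.isUnit_iff_isUnit_det _).1 hB.isUnit
  have hAt : Aᵀ = A := by simpa using hA.isHermitian.eq
  set B := A.submatrix e e with hBdef
  set P : Matrix X Y ℝ := (1 : Matrix X X ℝ).submatrix id e with hP
  have hPB : Pᵀ * (A * P) = B := by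
    ext i j
    simp [hP, hBdef, Matrix.mul_apply, Matrix.one_apply]
  have hP1 : Pᵀ *ᵥ (1 : X → ℝ) = 1 := by
    ext i
    simp [hP, Matrix.mulVec, dotProduct, Matrix.one_apply]
  set u := B⁻¹ *ᵥ (1 : Y → ℝ) with hu
  set w := A⁻¹ *ᵥ (1 : X → ℝ) with hw
  have hBu1 : B *ᵥ u = 1 := by
    rw [hu, Matrix.mulVec_mulVec, Matrix.mul_nonsing_inv _ hBu, Matrix.one_mulVec]
  have hAw : A *ᵥ w = 1 := by
    rw [hw, Matrix.mulVec_mulVec, Matrix.mul_nonsing_inv _ hAu, Matrix.one_mulVec]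
  have h := hA.posSemidef.dotProduct_mulVec_nonneg (w - P *ᵥ u)
  have h1 : (P *ᵥ u) ⬝ᵥ (1 : X → ℝ) = 1 ⬝ᵥ u := by
    rw [dotProduct_comm, Matrix.dotProduct_mulVec, ← Matrix.mulVec_transpose, hP1]
  have h2 : w ⬝ᵥ (A *ᵥ (P *ᵥ u)) = 1 ⬝ᵥ u := by
    rw [Matrix.dotProduct_mulVec, ← Matrix.mulVec_transpose, hAt, hAw, dotProduct_comm, h1]
  have h3 : (P *ᵥ u) ⬝ᵥ (A *ᵥ (P *ᵥ u)) = 1 ⬝ᵥ u := by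
    rw [dotProduct_comm, Matrix.dotProduct_mulVec, ← Matrix.mulVec_transpose,
      Matrix.mulVec_mulVec, Matrix.mulVec_mulVec, Matrix.mul_assoc, hPB, hBu1]
  rw [star_trivial, Matrix.mulVec_sub, sub_dotProduct, dotProduct_sub, dotProduct_sub,
    h2, h3, hAw, h1, dotProduct_comm w] at h
  linarith


/-- For a positive definite finite metric space `(X, d)` and a nonempty
subset `Y ⊆ X` with the induced metric, `Mag Y ≤ Mag X`. -/
theorem magnitude_monotone_subset
    {X : Type*} [Fintype X] [DecidableEq X] [MetricSpace X]
    (hX : (Matrix.of fun x y : X => Real.exp (-dist x y)).PosDef)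
    (s : Finset X) (hs : s.Nonempty) :
    ∑ x : ↥s, ∑ y : ↥s, (Matrix.of fun x y : ↥s => Real.exp (-dist x y))⁻¹ x y ≤
      ∑ x, ∑ y, (Matrix.of fun x y : X => Real.exp (-dist x y))⁻¹ x y := by

  have h := mag_aux _ hX (Subtype.val : ↥s → X) Subtype.val_injective
  have e : (Matrix.of fun x y : X => Real.exp (-dist x y)).submatrix
      (Subtype.val : ↥s → X) Subtype.val = Matrix.of fun x y : ↥s => Real.exp (-dist x y) := by
    ext x y; rfl
  rw [e] at h
  simpa [Matrix.mulVec, dotProduct] using h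
end

section
/- Let (X,d) be a nonempty positive definite finite metric space. Then Sp(X) ≤ Mag(X), i.e. Σ_{x∈X} 1/(Σ_{y∈X} exp(−d(x,y))) ≤ Σ_{x,y∈X} ζ_X⁻¹(x,y). -/
open Matrix in
theorem aux_quad {X : Type*} [Fintype X] [DecidableEq X] (Z : Matrix X X ℝ) (hZ : Z.PosDef)
    (v : X → ℝ) : 2 * ∑ x, v x - ∑ x, ∑ y, v x * Z x y * v y ≤ ∑ x, ∑ y, Z⁻¹ x y := by
  have hu : IsUnit Z.det := (Matrix.isUnit_iff_isUnit_det _).1 hZ.isUnit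
  set w : X → ℝ := Z⁻¹ *ᵥ 1 with hw
  have hZw : Z *ᵥ w = 1 := by
    rw [hw, Matrix.mulVec_mulVec, Matrix.mul_nonsing_inv _ hu, Matrix.one_mulVec]
  have hT : Zᵀ = Z := by
    have := hZ.isHermitian.eq
    rwa [Matrix.conjTranspose_eq_transpose_of_trivial] at this
  have hwv : w ⬝ᵥ (Z *ᵥ v) = 1 ⬝ᵥ v := by
    rw [Matrix.dotProduct_mulVec, ← Matrix.mulVec_transpose, hT, hZw]
  have h0 : 0 ≤ (v - w) ⬝ᵥ (Z *ᵥ (v - w)) := by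
    simpa using hZ.posSemidef.dotProduct_mulVec_nonneg (v - w)
  rw [Matrix.mulVec_sub, hZw, sub_dotProduct, dotProduct_sub, dotProduct_sub, hwv] at h0
  have e1 : v ⬝ᵥ (Z *ᵥ v) = ∑ x, ∑ y, v x * Z x y * v y := by
    simp [dotProduct, Matrix.mulVec, Finset.mul_sum, mul_assoc]
  have e2 : w ⬝ᵥ (1 : X → ℝ) = ∑ x, ∑ y, Z⁻¹ x y := by
    simp [hw, dotProduct, Matrix.mulVec]
  have e3 : v ⬝ᵥ (1 : X → ℝ) = ∑ x, v x := by simp [dotProduct]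
  have e4 : (1 : X → ℝ) ⬝ᵥ v = ∑ x, v x := by simp [dotProduct]
  rw [e1, e2, e3, e4] at h0
  linarith

/-- For a nonempty positive definite finite metric space `(X, d)`,
the spread is bounded above by the magnitude:
`∑ x, 1 / (∑ y, exp (-dist x y)) ≤ ∑ x y, ζ_X⁻¹ x y`. -/
theorem spread_le_magnitude
    {X : Type*} [Fintype X] [DecidableEq X] [Nonempty X] [MetricSpace X]
    (hζ : (Matrix.of fun x y : X => Real.exp (-dist x y)).PosDef) :
    ∑ x : X, 1 / (∑ y : X, Real.exp (-dist x y)) ≤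
      ∑ x, ∑ y, (Matrix.of fun x y : X => Real.exp (-dist x y))⁻¹ x y := by
  set v : X → ℝ := fun x => 1 / (∑ y : X, Real.exp (-dist x y)) with hv
  have hr : ∀ x : X, 0 < ∑ y : X, Real.exp (-dist x y) := fun x =>
    Finset.sum_pos (fun y _ => Real.exp_pos _) Finset.univ_nonempty
  have key := aux_quad _ hζ v
  have hA : ∑ x, ∑ y, v x ^ 2 * Real.exp (-dist x y) = ∑ x, v x := by
    refine Finset.sum_congr rfl fun x _ => ?_
    rw [← Finset.mul_sum]
    have := (hr x).ne'
    simp only [hv]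
    field_simp
  have hB : ∑ x, ∑ y, v y ^ 2 * Real.exp (-dist x y) = ∑ x, v x := by
    rw [Finset.sum_comm, ← hA]
    simp only [dist_comm]
  have hC : 2 * ∑ x, ∑ y, v x * Real.exp (-dist x y) * v y ≤
      ∑ x, ∑ y, v x ^ 2 * Real.exp (-dist x y) + ∑ x, ∑ y, v y ^ 2 * Real.exp (-dist x y) := by
    simp only [Finset.mul_sum, ← Finset.sum_add_distrib]
    refine Finset.sum_le_sum fun x _ => Finset.sum_le_sum fun y _ => ?_
    nlinarith [mul_nonneg (sq_nonneg (v x - v y)) (Real.exp_pos (-dist x y)).le]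
  simp only [Matrix.of_apply] at key
  rw [hA, hB] at hC
  linarith
end

section
/- Let (X,d) be a nonempty finite metric space that is homogeneous, i.e. for any two points x, x' ∈ X there exists a bijective self-isometry of (X,d) sending x to x', and suppose the similarity matrix ζ_X is invertible. Then Mag(X) = Sp(X), and moreover both are equal to |X| / (Σ_{y∈X} exp(−d(x₀,y))) for any fixed point x₀ ∈ X. -/
/-- For a nonempty homogeneous finite metric space `(X, d)` (any point can
be sent to any other by a bijective self-isometry) whose similarity matrix is invertible,
magnitude and spread coincide, and both equal `|X| / (∑ y, exp (-dist x₀ y))` for any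
fixed `x₀ ∈ X`. -/
theorem magnitude_eq_spread_of_homogeneous
    {X : Type*} [Fintype X] [DecidableEq X] [Nonempty X] [MetricSpace X]
    (hhom : ∀ x x' : X, ∃ g : X ≃ X, (∀ a b, dist (g a) (g b) = dist a b) ∧ g x = x')
    (hinv : IsUnit (Matrix.of fun x y : X => Real.exp (-dist x y)).det) :
    (∑ x, ∑ y, (Matrix.of fun x y : X => Real.exp (-dist x y))⁻¹ x y =
      ∑ x : X, 1 / (∑ y : X, Real.exp (-dist x y))) ∧
    ∀ x₀ : X, ∑ x, ∑ y, (Matrix.of fun x y : X => Real.exp (-dist x y))⁻¹ x y =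
      (Fintype.card X : ℝ) / (∑ y : X, Real.exp (-dist x₀ y)) := by
  have hs : ∀ x x' : X, ∑ y : X, Real.exp (-dist x y) = ∑ y : X, Real.exp (-dist x' y) := by
    intro x x'
    obtain ⟨g, hg, rfl⟩ := hhom x x'
    rw [← Equiv.sum_comp g (fun y => Real.exp (-dist (g x) y))]
    simp only [hg]
  have hpos : ∀ x : X, 0 < ∑ y : X, Real.exp (-dist x y) := fun x =>
    Finset.sum_pos (fun y _ => Real.exp_pos _) Finset.univ_nonempty
  have key : ∀ x₀ : X, ∑ x, ∑ y, (Matrix.of fun x y : X => Real.exp (-dist x y))⁻¹ x y =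
      (Fintype.card X : ℝ) / (∑ y : X, Real.exp (-dist x₀ y)) := by
    intro x₀
    have hrow : ∀ x : X, ∑ y, (Matrix.of fun x y : X => Real.exp (-dist x y))⁻¹ x y =
        1 / (∑ y : X, Real.exp (-dist x₀ y)) := by
      intro x
      rw [eq_div_iff (hpos x₀).ne', Finset.sum_mul]
      have h := congrArg (fun M : Matrix X X ℝ => ∑ z, M x z) (Matrix.nonsing_inv_mul _ hinv)
      simp only [Matrix.mul_apply, Matrix.one_apply, Finset.sum_ite_eq, Finset.mem_univ,
        if_true] at h
      rw [Finset.sum_comm] at h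
      rw [← h]
      refine Finset.sum_congr rfl fun y _ => ?_
      rw [← Finset.mul_sum, hs x₀ y]
      rfl
    simp only [hrow]
    simp [div_eq_mul_inv]
  refine ⟨?_, key⟩
  obtain ⟨x₀⟩ := ‹Nonempty X›
  have hc : ∀ x : X, 1 / (∑ y : X, Real.exp (-dist x y)) =
      1 / (∑ y : X, Real.exp (-dist x₀ y)) := fun x => by rw [hs x x₀]
  rw [key x₀, Finset.sum_congr rfl fun x _ => hc x]
  simp [div_eq_mul_inv]
end
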